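/- Kummer's first identity: for all a, c, w ∈ ℂ one has ₁𝐅₁(a; c; w) = e^w · ₁𝐅₁(c − a; c; −w). -/

import Mathlib

open Complex

/-- Olver-normalized confluent hypergeometric function
`₁𝐅₁(a; c; w) = ∑ (a)ₙ wⁿ/(n! Γ(c+n))`. -/
noncomputable def oneF1reg (a c w : ℂ) : ℂ :=
  ∑' n : ℕ, (ascPochhammer ℂ n).eval a * w ^ n / ((n.factorial : ℂ) * Complex.Gamma (c + n))

/-!
In the Cauchy product of `e^w` with the series of `₁𝐅₁(b; c; -w)`, the coefficient of `wⁿ/n!` is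
`∑ₖ (n choose k) (-1)ᵏ (b)ₖ / Γ(c+k)`. Since `1/Γ(c+k) = (c+k)ₙ₋ₖ / Γ(c+n)`, the Chu–Vandermonde
identity evaluates it to `(c-b)ₙ / Γ(c+n)`, which for `b = c - a` is the coefficient of
`₁𝐅₁(a; c; w)`.
-/

open Finset
open scoped Nat

theorem sum_antidiagonal_choose_mul_ascPochhammer_eval {R : Type*} [CommRing R] (b c : R) (n : ℕ) :
    ∑ p ∈ antidiagonal n, (n.choose p.1 : R) *
        ((-1) ^ p.1 * (ascPochhammer R p.1).eval b * (ascPochhammer R p.2).eval (c + p.1)) =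
      (ascPochhammer R n).eval (c - b) := by
  have desc_eval (k : ℕ) (r : R) :
      (descPochhammer ℤ k).smeval r = (ascPochhammer R k).eval (r - k + 1) := by
    rw [Polynomial.descPochhammer_smeval_eq_ascPochhammer, Polynomial.ascPochhammer_smeval_eq_eval]
  have desc_neg (k : ℕ) :
      (descPochhammer ℤ k).smeval (-b) = (-1) ^ k * (ascPochhammer R k).eval b := by
    have reflection := ascPochhammer_eval_neg_eq_descPochhammer R (-b) k
    rw [neg_neg] at reflection
    rw [desc_eval, ← descPochhammer_eval_eq_ascPochhammer, reflection, ← mul_assoc, ← mul_pow,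
      neg_one_mul, neg_neg, one_pow, one_mul]
  -- `(-1)ᵏ (b)ₖ` and `(c+k)ₙ₋ₖ` are falling factorials of `-b` and of `c + n - 1`.
  have vandermonde := Ring.descPochhammer_smeval_add n (Commute.all (-b) (c + n - 1))
  rw [desc_eval, show -b + (c + n - 1) - n + 1 = c - b by ring] at vandermonde
  rw [vandermonde]
  refine sum_congr rfl fun p hp ↦ ?_
  have shift : c + n - 1 - p.2 + 1 = c + p.1 := by
    rw [← mem_antidiagonal.mp hp]
    push_cast
    ring
  rw [desc_neg, desc_eval, shift]

theorem inv_Gamma_eq_ascPochhammer_eval_mul_inv_Gamma_add (s : ℂ) (n : ℕ) :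
    (Gamma s)⁻¹ = (ascPochhammer ℂ n).eval s * (Gamma (s + n))⁻¹ := by
  induction n with
  | zero => simp
  | succ n ih =>
    rw [ih, one_div_Gamma_eq_self_mul_one_div_Gamma_add_one, ascPochhammer_succ_eval, Nat.cast_succ,
      ← add_assoc, mul_assoc]

theorem sum_antidiagonal_choose_mul_ascPochhammer_eval_mul_inv_Gamma (b c : ℂ) (n : ℕ) :
    ∑ p ∈ antidiagonal n, (n.choose p.1 : ℂ) *
        ((-1) ^ p.1 * (ascPochhammer ℂ p.1).eval b * (Gamma (c + p.1))⁻¹) =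
      (ascPochhammer ℂ n).eval (c - b) * (Gamma (c + n))⁻¹ := by
  rw [← sum_antidiagonal_choose_mul_ascPochhammer_eval, sum_mul]
  refine sum_congr rfl fun p hp ↦ ?_
  rw [inv_Gamma_eq_ascPochhammer_eval_mul_inv_Gamma_add (c + p.1) p.2, ← mem_antidiagonal.mp hp,
    Nat.cast_add, ← add_assoc]
  ring

theorem exp_mul_tsum_mul_pow_div_factorial {𝕜 : Type*} [NormedField 𝕜] [NormedAlgebra ℚ 𝕜]
    [CompleteSpace 𝕜] {u : ℕ → 𝕜} {x : 𝕜} (hu : Summable fun n ↦ ‖u n * x ^ n / (n !)‖) :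
    NormedSpace.exp x * ∑' n, u n * x ^ n / n ! =
      ∑' n, (∑ p ∈ antidiagonal n, n.choose p.1 * u p.1) * x ^ n / n ! := by
  have : CharZero 𝕜 := algebraRat.charZero 𝕜
  rw [mul_comm, NormedSpace.exp_eq_tsum_div,
    tsum_mul_tsum_eq_tsum_sum_antidiagonal_of_summable_norm hu
      (NormedSpace.norm_expSeries_div_summable x)]
  refine tsum_congr fun n ↦ ?_
  rw [sum_mul, sum_div]
  refine sum_congr rfl fun p hp ↦ ?_
  have hn : (n ! : 𝕜) ≠ 0 := Nat.cast_ne_zero.mpr n.factorial_ne_zero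
  obtain rfl := mem_antidiagonal.mp hp
  rw [Nat.cast_add_choose, pow_add]
  field_simp

theorem summable_norm_oneF1reg_term (a c w : ℂ) :
    Summable fun n : ℕ ↦ ‖(ascPochhammer ℂ n).eval a * w ^ n / (n ! * Gamma (c + n))‖ := by
  have radius_eq_top : (regularizedHGFunSeries {a} {c}).radius = ⊤ :=
    radius_regularizedHGFunSeries_eq_top (by simp)
  have summable := (regularizedHGFunSeries {a} {c}).summable_norm_apply (x := w)
    (by simp [radius_eq_top])
  refine summable.congr fun n ↦ congrArg norm ?_
  rw [FormalMultilinearSeries.apply_eq_pow_smul_coeff, regularizedHGFunSeries_coeff,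
    regularizedHGFunCoeff, Multiset.map_singleton, Multiset.prod_singleton, Multiset.map_singleton,
    Multiset.prod_singleton, smul_eq_mul, mul_comm, div_mul_eq_mul_div]

/-- Kummer's first identity `₁𝐅₁(a; c; w) = e^w ₁𝐅₁(c-a; c; -w)`. -/
theorem kummer_first_identity (a c w : ℂ) :
    oneF1reg a c w = Complex.exp w * oneF1reg (c - a) c (-w) := by
  let u (n : ℕ) : ℂ := (-1) ^ n * (ascPochhammer ℂ n).eval (c - a) * (Gamma (c + n))⁻¹
  have term_eq (n : ℕ) : (ascPochhammer ℂ n).eval (c - a) * (-w) ^ n / (n ! * Gamma (c + n)) =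
      u n * w ^ n / n ! := by
    rw [neg_pow]
    simp only [u, div_eq_mul_inv, mul_inv]
    ring
  have summable_u : Summable fun n ↦ ‖u n * w ^ n / (n !)‖ := by
    simpa only [term_eq] using summable_norm_oneF1reg_term (c - a) c (-w)
  symm
  calc exp w * oneF1reg (c - a) c (-w)
      = NormedSpace.exp w * ∑' n, u n * w ^ n / n ! := by
        simp only [oneF1reg, term_eq, exp_eq_exp_ℂ]
    _ = ∑' n, (∑ p ∈ antidiagonal n, n.choose p.1 * u p.1) * w ^ n / n ! :=
        exp_mul_tsum_mul_pow_div_factorial summable_u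
    _ = ∑' n : ℕ, (ascPochhammer ℂ n).eval a * (Gamma (c + n))⁻¹ * w ^ n / n ! := by
        simp only [u, sum_antidiagonal_choose_mul_ascPochhammer_eval_mul_inv_Gamma,
          sub_sub_cancel]
    _ = oneF1reg a c w := tsum_congr fun n ↦ by
        simp only [div_eq_mul_inv, mul_inv]
        ring
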